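/- Let B be a ball in ℝⁿ, ω ⊂ B a measurable subset of positive Lebesgue measure, and p a real polynomial of degree at most k in n variables. Then sup_B |p| ≤ T_k((1+β)/(1-β)) · sup_ω |p|, where β = (1 - |ω|/|B|)^{1/n} and T_k is the Chebyshev polynomial of degree k. In particular sup_B |p| ≤ (4n|B|/|ω|)^k sup_ω |p|. -/

import Mathlib

open MeasureTheory Metric Set

/-!
For `y ∈ B`, integrate in polar coordinates around `y`. On a ray of length `R`, a subset of measure
`m` has weight `∫ r ^ (n - 1)` at most that of the outermost piece `(R - m, R]`. Hence, if every ray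
met `ω` in measure less than `(1 - β) R`, then `|ω|` would be less than `(1 - β ^ n) |B|`. So some
ray has a trace of measure at least `(1 - β) R`, and the one-dimensional Remez inequality for the
restriction of `p` to that ray bounds `|p y|`.

For the Remez inequality on `K ⊆ [a, b]`, the function `φ r = |K ∩ (-∞, r]|` is 1-Lipschitz, so the
points `e i ∈ K` with `φ (e i) = |K| (1 - x i) / 2`, where the `x i` are the extremal points of
`T_k`, are at least as far apart as the `x i`, up to the factor `|K| / 2`. Comparing Lagrange basis
polynomials factor by factor bounds `|q a|` by a sum of absolute values of the basis at the `x i`,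
and this sum equals `T_k` to the right of `1`, where the signs of the basis polynomials alternate
as the values `T_k (x i)` do.
-/

section Lagrange

variable {F ι : Type*} [Field F] [DecidableEq ι] {s : Finset ι} {v w : ι → F} {i : ι}
  {q : Polynomial F}

lemma eval_lagrangeBasis_eq_prod_div (x : F) :
    (Lagrange.basis s v i).eval x = ∏ j ∈ s.erase i, (x - v j) / (v i - v j) := by
  simp [Lagrange.basis, Lagrange.basisDivisor, Polynomial.eval_prod, div_eq_inv_mul]

lemma eval_eq_sum_eval_lagrangeBasis (hv : InjOn v s) (hq : q.degree < s.card) (x : F) :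
    q.eval x = ∑ i ∈ s, q.eval (v i) * (Lagrange.basis s v i).eval x := by
  conv_lhs => rw [Lagrange.eq_interpolate hv hq]
  simp [Lagrange.interpolate_apply, Polynomial.eval_finsetSum]

variable [LinearOrder F] [IsStrictOrderedRing F]

lemma abs_eval_le_sum_abs_eval_lagrangeBasis_mul {M : F} (hv : InjOn v s)
    (hq : q.degree < s.card) (hM : ∀ i ∈ s, |q.eval (v i)| ≤ M) (x : F) :
    |q.eval x| ≤ (∑ i ∈ s, |(Lagrange.basis s v i).eval x|) * M := by
  rw [eval_eq_sum_eval_lagrangeBasis hv hq, Finset.sum_mul]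
  refine (Finset.abs_sum_le_sum_abs _ _).trans (Finset.sum_le_sum fun i hi ↦ ?_)
  rw [abs_mul, mul_comm]
  gcongr
  exact hM i hi

lemma abs_eval_lagrangeBasis_le_abs_eval_lagrangeBasis {c x y : F} (hc : 0 < c)
    (hw : InjOn w s) (hi : i ∈ s) (hnum : ∀ j ∈ s, |x - v j| ≤ c * |y - w j|)
    (hden : ∀ j ∈ s, c * |w i - w j| ≤ |v i - v j|) :
    |(Lagrange.basis s v i).eval x| ≤ |(Lagrange.basis s w i).eval y| := by
  simp only [eval_lagrangeBasis_eq_prod_div, Finset.abs_prod, abs_div]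
  refine Finset.prod_le_prod (fun _ _ ↦ by positivity) fun j hj ↦ ?_
  obtain ⟨hji, hj⟩ := Finset.mem_erase.1 hj
  have hwij : 0 < |w i - w j| := abs_pos.2 (sub_ne_zero.2 fun h ↦ hji (hw hi hj h).symm)
  calc |x - v j| / |v i - v j| ≤ (c * |y - w j|) / (c * |w i - w j|) := by
        gcongr
        exacts [hnum j hj, hden j hj]
    _ = |y - w j| / |w i - w j| := mul_div_mul_left _ _ hc.ne'

end Lagrange

section Chebyshev

open Polynomial.Chebyshev

lemma eval_T_real_eq_cosh_arcosh (n : ℤ) {x : ℝ} (hx : 1 ≤ x) :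
    (T ℝ n).eval x = Real.cosh (n * Real.arcosh x) := by
  rw [← T_real_cosh, Real.cosh_arcosh hx]

lemma monotoneOn_eval_T_real (n : ℤ) : MonotoneOn (fun x ↦ (T ℝ n).eval x) (Ici 1) := by
  intro x hx y hy hxy
  have harcosh := (Real.arcosh_le_arcosh (one_pos.trans_le hx) (one_pos.trans_le hy)).2 hxy
  simp only [eval_T_real_eq_cosh_arcosh n hx, eval_T_real_eq_cosh_arcosh n hy, Real.cosh_le_cosh,
    abs_mul, abs_of_nonneg (Real.arcosh_nonneg hx), abs_of_nonneg (Real.arcosh_nonneg hy)]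
  gcongr

lemma eval_T_real_le_two_mul_pow (k : ℕ) {x : ℝ} (hx : 1 ≤ x) :
    (T ℝ k).eval x ≤ (2 * x) ^ k := by
  set u := Real.arcosh x
  have hu : 0 ≤ k * u := mul_nonneg k.cast_nonneg (Real.arcosh_nonneg hx)
  calc (T ℝ k).eval x = Real.cosh (k * u) := by
        simpa using eval_T_real_eq_cosh_arcosh k hx
    _ ≤ Real.exp (k * u) := by
        rw [Real.cosh_eq]
        linarith [Real.exp_le_exp.2 (neg_le_self hu)]
    _ = Real.exp u ^ k := Real.exp_nat_mul u k
    _ ≤ (2 * Real.cosh u) ^ k := by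
        gcongr
        rw [Real.cosh_eq]
        linarith [Real.exp_pos (-u)]
    _ = (2 * x) ^ k := by rw [Real.cosh_arcosh hx]

lemma neg_one_pow_mul_eval_lagrangeBasis_node_nonneg {k i : ℕ} (hi : i ≤ k) {x : ℝ} (hx : 1 ≤ x) :
    0 ≤ (-1) ^ i * (Lagrange.basis (Finset.range (k + 1)) (node k) i).eval x := by
  have hnum : 0 ≤ ∏ j ∈ (Finset.range (k + 1)).erase i, (x - node k j) :=
    Finset.prod_nonneg fun j _ ↦ sub_nonneg.2 (node_mem_Icc.2.trans hx)
  rw [eval_lagrangeBasis_eq_prod_div, Finset.prod_div_distrib, mul_div_left_comm]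
  exact mul_nonneg hnum
    (div_nonneg_iff.2 (mul_nonneg_iff.1 (zero_lt_prod_node_sub_node hi).le))

lemma eval_T_real_eq_sum_abs_eval_lagrangeBasis (k : ℕ) {x : ℝ} (hx : 1 ≤ x) :
    (T ℝ k).eval x =
      ∑ i ∈ Finset.range (k + 1), |(Lagrange.basis (Finset.range (k + 1)) (node k) i).eval x| := by
  have hdeg : (T ℝ k).degree < (Finset.range (k + 1)).card := by
    rw [Finset.card_range, degree_T]
    exact_mod_cast k.lt_succ_self
  rw [eval_eq_sum_eval_lagrangeBasis (strictAntiOn_node k).injOn hdeg]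
  refine Finset.sum_congr rfl fun i hi ↦ ?_
  have hik : i ≤ k := Finset.mem_range_succ_iff.1 hi
  rw [eval_T_real_node (Finset.mem_Iic.2 hik),
    ← abs_of_nonneg (neg_one_pow_mul_eval_lagrangeBasis_node_nonneg hik hx), abs_mul,
    abs_neg_one_pow, one_mul]

end Chebyshev

section ChebyshevArgument

lemma one_sub_rpow_one_div_mem_Ico {n : ℕ} (hn : n ≠ 0) {ρ : ℝ} (hρ : ρ ∈ Ioc 0 1) :
    (1 - ρ) ^ ((1 : ℝ) / n) ∈ Ico 0 1 :=
  ⟨Real.rpow_nonneg (sub_nonneg.2 hρ.2) _,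
    Real.rpow_lt_one (sub_nonneg.2 hρ.2) (sub_lt_self 1 hρ.1) (by positivity)⟩

lemma one_sub_one_sub_rpow_one_div_pow {n : ℕ} (hn : n ≠ 0) {ρ : ℝ} (hρ : ρ ≤ 1) :
    1 - ((1 - ρ) ^ ((1 : ℝ) / n)) ^ n = ρ := by
  rw [one_div, Real.rpow_inv_natCast_pow (sub_nonneg.2 hρ) hn, sub_sub_cancel]

lemma one_le_one_add_div_one_sub {β : ℝ} (hβ₀ : 0 ≤ β) (hβ₁ : β < 1) : 1 ≤ (1 + β) / (1 - β) := by
  rw [le_div_iff₀ (sub_pos.2 hβ₁)]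
  linarith

lemma one_add_div_one_sub_le {n : ℕ} (hn : n ≠ 0) {β : ℝ} (hβ₀ : 0 ≤ β) (hβ₁ : β < 1) :
    (1 + β) / (1 - β) ≤ 2 * n / (1 - β ^ n) := by
  have hpow : 0 < 1 - β ^ n := sub_pos.2 (pow_lt_one₀ hβ₀ hβ₁ hn)
  have hbernoulli : 1 - β ^ n ≤ n * (1 - β) := by
    linarith [one_add_mul_sub_le_pow (by linarith : -1 ≤ β) n]
  rw [div_le_div_iff₀ (sub_pos.2 hβ₁) hpow]
  calc (1 + β) * (1 - β ^ n) ≤ 2 * (n * (1 - β)) := by gcongr; linarith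
    _ = 2 * n * (1 - β) := by ring

open Polynomial.Chebyshev in
lemma eval_T_one_add_div_one_sub_le {n : ℕ} (hn : n ≠ 0) (k : ℕ) {β : ℝ} (hβ₀ : 0 ≤ β)
    (hβ₁ : β < 1) : (T ℝ k).eval ((1 + β) / (1 - β)) ≤ (4 * n / (1 - β ^ n)) ^ k := by
  have h := one_le_one_add_div_one_sub hβ₀ hβ₁
  calc (T ℝ k).eval ((1 + β) / (1 - β)) ≤ (2 * ((1 + β) / (1 - β))) ^ k :=
        eval_T_real_le_two_mul_pow k h
    _ ≤ (2 * (2 * n / (1 - β ^ n))) ^ k := by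
        gcongr ?_ ^ k
        exact mul_le_mul_of_nonneg_left (one_add_div_one_sub_le hn hβ₀ hβ₁) zero_le_two
    _ = (4 * n / (1 - β ^ n)) ^ k := by ring

end ChebyshevArgument

section Remez

variable {K : Set ℝ} {a b : ℝ}

lemma volume_real_le_sub_of_subset_Icc (hab : a ≤ b) (hKab : K ⊆ Icc a b) :
    volume.real K ≤ b - a :=
  (measureReal_mono hKab measure_Icc_lt_top.ne).trans_eq (Real.volume_real_Icc_of_le hab)

lemma volume_real_inter_Iic_mono (hK : volume K ≠ ⊤) :
    Monotone fun r ↦ volume.real (K ∩ Iic r) := fun _ _ hrs ↦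
  measureReal_mono (inter_subset_inter_right K (Iic_subset_Iic.2 hrs))
    (measure_ne_top_of_subset inter_subset_left hK)

lemma volume_real_inter_Iic_sub_le (hab : a ≤ b) :
    volume.real (K ∩ Iic b) - volume.real (K ∩ Iic a) ≤ b - a := by
  rw [sub_le_iff_le_add']
  calc volume.real (K ∩ Iic b) = volume.real (K ∩ Iic a ∪ K ∩ Ioc a b) := by
        rw [← inter_union_distrib_left, Iic_union_Ioc_eq_Iic hab]
    _ ≤ volume.real (K ∩ Iic a) + volume.real (K ∩ Ioc a b) := measureReal_union_le _ _
    _ ≤ volume.real (K ∩ Iic a) + volume.real (Ioc a b) := by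
        gcongr
        exacts [measure_Ioc_lt_top.ne, inter_subset_right]
    _ = volume.real (K ∩ Iic a) + (b - a) := by rw [Real.volume_real_Ioc_of_le hab]

lemma lipschitzWith_volume_real_inter_Iic (hK : volume K ≠ ⊤) :
    LipschitzWith 1 fun r ↦ volume.real (K ∩ Iic r) :=
  .of_le_add fun r s ↦ by
    rcases le_total s r with h | h
    · linarith [volume_real_inter_Iic_sub_le (K := K) h, Real.dist_eq r s, le_abs_self (r - s)]
    · exact (volume_real_inter_Iic_mono hK h).trans (le_add_of_nonneg_right dist_nonneg)

lemma exists_mem_volume_real_inter_Iic_eq (hK : IsCompact K) (hne : K.Nonempty) {τ : ℝ}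
    (hτ : τ ∈ Icc 0 (volume.real K)) : ∃ e ∈ K, volume.real (K ∩ Iic e) = τ := by
  have hmin : volume.real (K ∩ Iic (sInf K)) = 0 := by
    have hsub : K ∩ Iic (sInf K) ⊆ {sInf K} := fun z hz ↦
      le_antisymm hz.2 (csInf_le hK.bddBelow hz.1)
    simp [measureReal_def, measure_mono_null hsub (measure_singleton _)]
  have hmax : K ∩ Iic (sSup K) = K := inter_eq_left.2 fun z hz ↦ le_csSup hK.bddAbove hz
  obtain ⟨r, hr, rfl⟩ : τ ∈ (fun r ↦ volume.real (K ∩ Iic r)) '' Icc (sInf K) (sSup K) := by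
    refine intermediate_value_Icc (csInf_le hK.bddBelow (hK.sSup_mem hne))
      (lipschitzWith_volume_real_inter_Iic hK.measure_ne_top).continuous.continuousOn ?_
    rwa [hmin, hmax]
  have hKr : IsCompact (K ∩ Iic r) := hK.inter_right isClosed_Iic
  have hmem : sSup (K ∩ Iic r) ∈ K ∩ Iic r := hKr.sSup_mem ⟨_, hK.sInf_mem hne, hr.1⟩
  refine ⟨_, hmem.1, congrArg volume.real ?_⟩
  exact (inter_subset_inter_right K (Iic_subset_Iic.2 hmem.2)).antisymm
    fun z hz ↦ ⟨hz.1, le_csSup hKr.bddAbove hz⟩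

lemma volume_real_inter_Iic_add_le (hKab : K ⊆ Icc a b) {e : ℝ} (he : e ∈ K) :
    e + volume.real K ≤ volume.real (K ∩ Iic e) + b := by
  have h := volume_real_inter_Iic_sub_le (K := K) (hKab he).2
  rw [inter_eq_left.2 (hKab.trans Icc_subset_Iic_self)] at h
  linarith

open Polynomial.Chebyshev in
lemma exists_mem_spread_like_node (hK : IsCompact K) (hKab : K ⊆ Icc a b) (hpos : 0 < volume.real K)
    (k : ℕ) :
    ∃ e : ℕ → ℝ, (∀ i, e i ∈ K) ∧
      (∀ i, |a - e i| ≤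
        volume.real K / 2 * |2 * (b - a) / volume.real K - 1 - node k i|) ∧
      ∀ i j, volume.real K / 2 * |node k i - node k j| ≤ |e i - e j| := by
  have hne : K.Nonempty := nonempty_of_measureReal_ne_zero hpos.ne'
  have hτ (i : ℕ) : volume.real K * (1 - node k i) / 2 ∈ Icc 0 (volume.real K) := by
    obtain ⟨h₁, h₂⟩ := node_mem_Icc (n := k) (i := i)
    constructor <;> nlinarith
  choose e heK he using fun i ↦ exists_mem_volume_real_inter_Iic_eq hK hne (hτ i)
  refine ⟨e, heK, fun i ↦ ?_, fun i j ↦ ?_⟩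
  · rw [abs_sub_comm, abs_of_nonneg (sub_nonneg.2 (hKab (heK i)).1)]
    calc e i - a ≤ volume.real K / 2 * (2 * (b - a) / volume.real K - 1 - node k i) := by
          have := volume_real_inter_Iic_add_le hKab (heK i)
          rw [he i] at this
          field_simp
          linarith
      _ ≤ _ := by gcongr; exact le_abs_self _
  · calc volume.real K / 2 * |node k i - node k j|
        = |volume.real (K ∩ Iic (e i)) - volume.real (K ∩ Iic (e j))| := by
          have hdiff : volume.real K * (1 - node k i) / 2 - volume.real K * (1 - node k j) / 2 =
              volume.real K / 2 * (node k j - node k i) := by ring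
          rw [he, he, hdiff, abs_mul, abs_of_pos (half_pos hpos), abs_sub_comm]
      _ ≤ |e i - e j| := by
          simpa [Real.dist_eq] using
            (lipschitzWith_volume_real_inter_Iic hK.measure_ne_top).dist_le_mul (e i) (e j)

open Polynomial.Chebyshev in
theorem abs_eval_le_eval_T_mul_of_isCompact {k : ℕ} {q : Polynomial ℝ} {M : ℝ}
    (hq : q.natDegree ≤ k) (hK : IsCompact K) (hKab : K ⊆ Icc a b) (hpos : 0 < volume.real K)
    (hM : ∀ z ∈ K, |q.eval z| ≤ M) :
    |q.eval a| ≤ (T ℝ k).eval (2 * (b - a) / volume.real K - 1) * M := by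
  obtain ⟨e, heK, hnum, hden⟩ := exists_mem_spread_like_node hK hKab hpos k
  have hnode := (strictAntiOn_node k).injOn
  have hKle : volume.real K ≤ b - a := by
    obtain ⟨z, hz⟩ := nonempty_of_measureReal_ne_zero hpos.ne'
    exact volume_real_le_sub_of_subset_Icc ((hKab hz).1.trans (hKab hz).2) hKab
  have hX : 1 ≤ 2 * (b - a) / volume.real K - 1 := by
    rw [le_sub_iff_add_le, le_div_iff₀ hpos]
    linarith
  have he : InjOn e (Finset.range (k + 1)) := fun i hi j hj hij ↦ hnode hi hj <| by
    have h := hden i j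
    rw [hij, sub_self, abs_zero] at h
    exact sub_eq_zero.1 (abs_nonpos_iff.1 (nonpos_of_mul_nonpos_right h (half_pos hpos)))
  have hdeg : q.degree < (Finset.range (k + 1)).card := by
    rw [Finset.card_range]
    exact Polynomial.degree_le_natDegree.trans_lt (by exact_mod_cast Nat.lt_succ_of_le hq)
  have hM0 : 0 ≤ M := (abs_nonneg _).trans (hM _ (heK 0))
  refine (abs_eval_le_sum_abs_eval_lagrangeBasis_mul he hdeg (fun i _ ↦ hM _ (heK i)) a).trans ?_
  rw [eval_T_real_eq_sum_abs_eval_lagrangeBasis k hX]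
  refine mul_le_mul_of_nonneg_right (Finset.sum_le_sum fun i hi ↦ ?_) hM0
  exact abs_eval_lagrangeBasis_le_abs_eval_lagrangeBasis (half_pos hpos) hnode hi (fun j _ ↦ hnum j)
    fun j _ ↦ hden i j

end Remez

section Rearrangement

open scoped ENNReal

lemma setLIntegral_le_setLIntegral_Ioc_of_monotoneOn {f : ℝ → ℝ≥0∞} {A : Set ℝ} {a b : ℝ}
    (hA : MeasurableSet A) (hAab : A ⊆ Icc a b) (hf : MonotoneOn f (Icc a b)) :
    ∫⁻ r in A, f r ≤ ∫⁻ r in Ioc (b - volume.real A) b, f r := by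
  rcases A.eq_empty_or_nonempty with rfl | ⟨z, hz⟩
  · simp
  have hab : a ≤ b := (hAab hz).1.trans (hAab hz).2
  have hAfin : volume A ≠ ⊤ := measure_ne_top_of_subset hAab measure_Icc_lt_top.ne
  have hAle : volume.real A ≤ b - a := volume_real_le_sub_of_subset_Icc hab hAab
  set c := b - volume.real A with hc
  have hcmem : c ∈ Icc a b := ⟨by linarith, sub_le_self _ measureReal_nonneg⟩
  have hvol : volume A = volume (Ioc c b) := by
    rw [Real.volume_Ioc, hc, sub_sub_cancel, ofReal_measureReal hAfin]
  have hdiff : volume (A \ Ioc c b) = volume (Ioc c b \ A) :=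
    measure_sdiff_symm hA.nullMeasurableSet measurableSet_Ioc.nullMeasurableSet hvol
      (measure_ne_top_of_subset inter_subset_left hAfin)
  have hle : ∫⁻ r in A \ Ioc c b, f r ≤ ∫⁻ r in Ioc c b \ A, f r := calc
    ∫⁻ r in A \ Ioc c b, f r ≤ ∫⁻ _ in A \ Ioc c b, f c :=
        setLIntegral_mono' (hA.diff measurableSet_Ioc) fun r hr ↦
          hf (hAab hr.1) hcmem (not_lt.1 fun h ↦ hr.2 ⟨h, (hAab hr.1).2⟩)
    _ = ∫⁻ _ in Ioc c b \ A, f c := by rw [setLIntegral_const, setLIntegral_const, hdiff]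
    _ ≤ ∫⁻ r in Ioc c b \ A, f r :=
        setLIntegral_mono' (measurableSet_Ioc.diff hA) fun r hr ↦
          hf hcmem ⟨hcmem.1.trans hr.1.1.le, hr.1.2⟩ hr.1.1.le
  rw [← lintegral_inter_add_sdiff f A (measurableSet_Ioc (a := c) (b := b)),
    ← lintegral_inter_add_sdiff f (Ioc c b) hA, inter_comm]
  gcongr

lemma lintegral_Ioc_ofReal_pow (d : ℕ) {a b : ℝ} (ha : 0 ≤ a) (hab : a ≤ b) :
    ∫⁻ r in Ioc a b, .ofReal (r ^ d) = .ofReal ((b ^ (d + 1) - a ^ (d + 1)) / (d + 1)) := by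
  rw [← ofReal_integral_eq_lintegral_ofReal (intervalIntegral.intervalIntegrable_pow _).1,
    ← intervalIntegral.integral_of_le hab, integral_pow]
  filter_upwards [ae_restrict_mem measurableSet_Ioc] with r hr
  exact pow_nonneg (ha.trans hr.1.le) _

lemma mul_le_volume_real_of_lintegral_pow_le {d : ℕ} {A : Set ℝ} {R β : ℝ}
    (hA : MeasurableSet A) (hAR : A ⊆ Icc 0 R) (hR : 0 ≤ R) (hβ : 0 ≤ β)
    (hle : .ofReal (1 - β ^ (d + 1)) * ∫⁻ r in Ioc 0 R, .ofReal (r ^ d) ≤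
      ∫⁻ r in A, .ofReal (r ^ d)) :
    (1 - β) * R ≤ volume.real A := by
  have hAle : volume.real A ≤ R := by
    simpa using volume_real_le_sub_of_subset_Icc hR hAR
  have hsub : 0 ≤ R - volume.real A := sub_nonneg.2 hAle
  have hmono : MonotoneOn (fun r : ℝ ↦ ENNReal.ofReal (r ^ d)) (Icc 0 R) :=
    fun r hr s _ hrs ↦ ENNReal.ofReal_le_ofReal (pow_le_pow_left₀ hr.1 hrs d)
  have hfull : ENNReal.ofReal (1 - β ^ (d + 1)) * ∫⁻ r in Ioc 0 R, .ofReal (r ^ d) =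
      .ofReal ((1 - β ^ (d + 1)) * R ^ (d + 1) / (d + 1)) := by
    rw [lintegral_Ioc_ofReal_pow d le_rfl hR, zero_pow d.succ_ne_zero, sub_zero,
      ← ENNReal.ofReal_mul' (by positivity), mul_div_assoc]
  have htail := lintegral_Ioc_ofReal_pow d hsub (sub_le_self R measureReal_nonneg)
  have htail₀ : 0 ≤ R ^ (d + 1) - (R - volume.real A) ^ (d + 1) :=
    sub_nonneg.2 (pow_le_pow_left₀ hsub (sub_le_self R measureReal_nonneg) _)
  have hcmp : (1 - β ^ (d + 1)) * R ^ (d + 1) ≤ R ^ (d + 1) - (R - volume.real A) ^ (d + 1) := by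
    have h := hle.trans (setLIntegral_le_setLIntegral_Ioc_of_monotoneOn hA hAR hmono)
    rwa [hfull, htail, ENNReal.ofReal_le_ofReal_iff (div_nonneg htail₀ d.cast_add_one_pos.le),
      div_le_div_iff_of_pos_right d.cast_add_one_pos] at h
  have hroot : R - volume.real A ≤ β * R := by
    refine le_of_pow_le_pow_left₀ d.succ_ne_zero (by positivity) ?_
    rw [mul_pow, Nat.succ_eq_add_one]
    linarith
  linarith

lemma exists_ne_zero_and_le_of_lintegral_le {α : Type*} [MeasurableSpace α] {ν : Measure α}
    {f g : α → ℝ≥0∞} (hg : AEMeasurable g ν) (hg₀ : ∫⁻ a, g a ∂ν ≠ 0) (hf : ∫⁻ a, f a ∂ν ≠ ∞)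
    (hgf : ∀ a, g a = 0 → f a = 0) (hle : ∫⁻ a, g a ∂ν ≤ ∫⁻ a, f a ∂ν) :
    ∃ a, g a ≠ 0 ∧ g a ≤ f a := by
  by_contra! hlt
  have hfg (a : α) : f a ≤ g a := by
    by_cases ha : g a = 0
    · rw [ha, hgf a ha]
    · exact (hlt a ha).le
  refine hle.not_gt (lintegral_strict_mono_of_ae_le_of_frequently_ae_lt hg hf (.of_forall hfg) ?_)
  have hsupp : ∃ᵐ a ∂ν, g a ≠ 0 := fun h ↦ hg₀ <| by
    rw [lintegral_eq_zero_iff' hg]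
    filter_upwards [h] with a ha using not_not.1 ha
  exact hsupp.mono fun a ha ↦ (hlt a ha).ne

end Rearrangement

section Rays

variable {V : Type*} [NormedAddCommGroup V] [NormedSpace ℝ V]

/-- The trace of `S` on the open ray from `y` in direction `v`, as a set of parameters. -/
def rayTrace (S : Set V) (y v : V) : Set ℝ := {r | 0 < r ∧ y + r • v ∈ S}

lemma rayTrace_mono {S S' : Set V} (h : S ⊆ S') (y v : V) : rayTrace S y v ⊆ rayTrace S' y v :=
  fun _ hr ↦ ⟨hr.1, h hr.2⟩

lemma exists_Ioo_subset_rayTrace_subset_Ioc {B : Set V} {y : V} (hB : StarConvex ℝ y B)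
    (hbdd : Bornology.IsBounded B) {v : V} (hv : v ≠ 0) :
    ∃ R, 0 ≤ R ∧ Ioo 0 R ⊆ rayTrace B y v ∧ rayTrace B y v ⊆ Ioc 0 R := by
  have hray : BddAbove (rayTrace B y v) := by
    obtain ⟨C, hC⟩ := hbdd.subset_closedBall y
    refine ⟨C / ‖v‖, fun r hr ↦ ?_⟩
    rw [le_div_iff₀ (norm_pos_iff.2 hv)]
    simpa [norm_smul, abs_of_pos hr.1] using hC hr.2
  refine ⟨sSup (rayTrace B y v), Real.sSup_nonneg fun r hr ↦ hr.1.le, fun r hr ↦ ?_,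
    fun r hr ↦ ⟨hr.1, le_csSup hray hr⟩⟩
  have hne : (rayTrace B y v).Nonempty := nonempty_iff_ne_empty.2 fun h ↦ by
    simp [h] at hr
  obtain ⟨s, hs, hrs⟩ := exists_lt_of_lt_csSup hne hr.2
  refine ⟨hr.1, ?_⟩
  have h := hB.add_smul_mem hs.2 (div_nonneg hr.1.le hs.1.le) ((div_le_one hs.1).2 hrs.le)
  rwa [smul_smul, div_mul_cancel₀ _ hs.1.ne'] at h

variable [MeasurableSpace V] [BorelSpace V]

lemma measurableSet_rayTrace {S : Set V} (hS : MeasurableSet S) (y v : V) :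
    MeasurableSet (rayTrace S y v) :=
  measurableSet_Ioi.inter (hS.preimage (by fun_prop : Measurable fun r : ℝ ↦ y + r • v))

lemma volumeIoiPow_preimage_eq_lintegral_rayTrace {S : Set V} (hS : MeasurableSet S) (y v : V)
    (d : ℕ) : Measure.volumeIoiPow d {r | y + r.1 • v ∈ S} =
    ∫⁻ r in rayTrace S y v, ENNReal.ofReal (r ^ d) := by
  have hmeas : MeasurableSet {r : Ioi (0 : ℝ) | y + r.1 • v ∈ S} :=
    hS.preimage (by fun_prop : Measurable fun r : Ioi (0 : ℝ) ↦ y + r.1 • v)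
  rw [Measure.volumeIoiPow, withDensity_apply _ hmeas,
    setLIntegral_subtype measurableSet_Ioi _ fun r : ℝ ↦ .ofReal (r ^ d)]
  congr 2
  ext r
  simp [rayTrace, and_comm]

lemma measurableSet_polar {S : Set V} (hS : MeasurableSet S) (y : V) :
    MeasurableSet {w : sphere (0 : V) 1 × Ioi (0 : ℝ) | y + w.2.1 • w.1.1 ∈ S} := by
  apply hS.preimage
  fun_prop

lemma measurable_lintegral_rayTrace {S : Set V} (hS : MeasurableSet S) (y : V) (d : ℕ) :
    Measurable fun θ : sphere (0 : V) 1 ↦ ∫⁻ r in rayTrace S y θ, ENNReal.ofReal (r ^ d) := by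
  simp_rw [← volumeIoiPow_preimage_eq_lintegral_rayTrace hS]
  exact measurable_measure_prodMk_left (measurableSet_polar hS y)

variable [FiniteDimensional ℝ V] [Nontrivial V] (μ : Measure V) [μ.IsAddHaarMeasure]

lemma measure_eq_lintegral_rayTrace {S : Set V} (hS : MeasurableSet S) (y : V) :
    μ S = ∫⁻ θ : sphere (0 : V) 1,
      (∫⁻ r in rayTrace S y θ, .ofReal (r ^ (Module.finrank ℝ V - 1))) ∂μ.toSphere := by
  set W := {w : sphere (0 : V) 1 × Ioi (0 : ℝ) | y + w.2.1 • w.1.1 ∈ S}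
  have hpre : (Subtype.val : ({0}ᶜ : Set V) → V) ⁻¹' ((y + ·) ⁻¹' S) =
      homeomorphUnitSphereProd V ⁻¹' W := by
    ext z
    simp [W, smul_smul, mul_inv_cancel₀ (norm_ne_zero_iff.2 z.2)]
  calc μ S = μ ((y + ·) ⁻¹' S) := (measure_preimage_add μ y S).symm
    _ = μ.comap (Subtype.val : ({0}ᶜ : Set V) → V) (Subtype.val ⁻¹' ((y + ·) ⁻¹' S)) := by
        rw [comap_subtype_coe_apply (measurableSet_singleton _).compl, Subtype.image_preimage_coe,
          inter_comm, ← sdiff_eq, measure_sdiff_null (measure_singleton _)]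
    _ = μ.toSphere.prod (.volumeIoiPow (Module.finrank ℝ V - 1)) W := by
        rw [hpre, μ.measurePreserving_homeomorphUnitSphereProd.measure_preimage
          (measurableSet_polar hS y).nullMeasurableSet]
    _ = _ := by
        rw [Measure.prod_apply (measurableSet_polar hS y)]
        exact lintegral_congr fun θ ↦ volumeIoiPow_preimage_eq_lintegral_rayTrace hS y θ _

variable {μ} {B E : Set V} {y : V} {β : ℝ}

lemma exists_mul_le_volume_real_rayTrace (hB : StarConvex ℝ y B) (hbdd : Bornology.IsBounded B)
    (hBm : MeasurableSet B) (hEm : MeasurableSet E) (hEB : E ⊆ B) (hpos : μ B ≠ 0) (hβ₀ : 0 ≤ β)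
    (hβ₁ : β < 1) (hle : .ofReal (1 - β ^ Module.finrank ℝ V) * μ B ≤ μ E) :
    ∃ (v : V) (R : ℝ), 0 < R ∧ rayTrace E y v ⊆ Icc 0 R ∧
      (1 - β) * R ≤ volume.real (rayTrace E y v) := by
  obtain ⟨d, hd⟩ := Nat.exists_eq_add_one_of_ne_zero (Module.finrank_pos (R := ℝ) (M := V)).ne'
  have hc : ENNReal.ofReal (1 - β ^ (d + 1)) ≠ 0 := by
    simpa using pow_lt_one₀ hβ₀ hβ₁ d.succ_ne_zero
  have hpolar {S : Set V} (hS : MeasurableSet S) : μ S = ∫⁻ θ : sphere (0 : V) 1,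
      (∫⁻ r in rayTrace S y θ, .ofReal (r ^ d)) ∂μ.toSphere := by
    simpa [hd] using measure_eq_lintegral_rayTrace μ hS y
  have hmeasB := measurable_lintegral_rayTrace hBm y d
  rw [hd, hpolar hBm, ← lintegral_const_mul _ hmeasB, hpolar hEm] at hle
  obtain ⟨θ, hθ₀, hθ⟩ := exists_ne_zero_and_le_of_lintegral_le (hmeasB.const_mul _).aemeasurable
    (by rwa [lintegral_const_mul _ hmeasB, ← hpolar hBm, mul_ne_zero_iff, and_iff_right hc])
    (by rw [← hpolar hEm]; exact (hbdd.subset hEB).measure_lt_top.ne)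
    (fun θ hθ ↦ le_bot_iff.1 <| (lintegral_mono_set (rayTrace_mono hEB y θ)).trans_eq <|
      (mul_eq_zero.1 hθ).resolve_left hc) hle
  obtain ⟨R, hR, hsubR, hRsub⟩ := exists_Ioo_subset_rayTrace_subset_Ioc hB hbdd
    (ne_zero_of_mem_unit_sphere θ)
  have htrace : rayTrace E y θ ⊆ Icc 0 R :=
    (rayTrace_mono hEB y θ).trans (hRsub.trans Ioc_subset_Icc_self)
  refine ⟨θ, R, hR.lt_of_ne ?_, htrace, ?_⟩
  · rintro rfl
    exact hθ₀ (by simp [subset_empty_iff.1 (hRsub.trans_eq (Ioc_self 0))])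
  · refine mul_le_volume_real_of_lintegral_pow_le (d := d) (measurableSet_rayTrace hEm y θ) htrace
      hR hβ₀ (le_trans ?_ hθ)
    rw [← Measure.restrict_congr_set Ioo_ae_eq_Ioc]
    gcongr

open Polynomial.Chebyshev in
theorem abs_le_eval_T_mul_of_polynomial_on_lines {f : V → ℝ} {k : ℕ} {M : ℝ}
    (hB : StarConvex ℝ y B) (hbdd : Bornology.IsBounded B)
    (hBm : MeasurableSet B) (hEm : MeasurableSet E) (hEB : E ⊆ B) (hpos : μ B ≠ 0) (hβ₀ : 0 ≤ β)
    (hβ₁ : β < 1) (hle : .ofReal (1 - β ^ Module.finrank ℝ V) * μ B ≤ μ E)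
    (hf : ∀ v, ∃ q : Polynomial ℝ, q.natDegree ≤ k ∧ ∀ r, q.eval r = f (y + r • v))
    (hM : ∀ z ∈ E, |f z| ≤ M) :
    |f y| ≤ (T ℝ k).eval ((1 + β) / (1 - β)) * M := by
  obtain ⟨v, R, hR, hsub, hvol⟩ :=
    exists_mul_le_volume_real_rayTrace hB hbdd hBm hEm hEB hpos hβ₀ hβ₁ hle
  obtain ⟨q, hq, hqf⟩ := hf v
  have hβ : 0 < 1 - β := sub_pos.2 hβ₁
  set K := Icc 0 R ∩ {r | |q.eval r| ≤ M}
  have hKsub : K ⊆ Icc 0 R := inter_subset_left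
  have hK : IsCompact K :=
    isCompact_Icc.inter_right (isClosed_le q.continuous.abs continuous_const)
  have htrace : rayTrace E y v ⊆ K := fun r hr ↦
    ⟨hsub hr, by simpa [hqf] using hM _ hr.2⟩
  have hKvol : (1 - β) * R ≤ volume.real K :=
    hvol.trans (measureReal_mono htrace hK.measure_ne_top)
  have hKpos : 0 < volume.real K := (mul_pos hβ hR).trans_le hKvol
  have hKle : volume.real K ≤ R := by simpa using volume_real_le_sub_of_subset_Icc hR.le hKsub
  obtain ⟨z, hz⟩ := nonempty_of_measureReal_ne_zero hKpos.ne'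
  calc |f y| = |q.eval 0| := by simp [hqf]
    _ ≤ (T ℝ k).eval (2 * (R - 0) / volume.real K - 1) * M :=
        abs_eval_le_eval_T_mul_of_isCompact hq hK hKsub hKpos fun r hr ↦ hr.2
    _ ≤ (T ℝ k).eval ((1 + β) / (1 - β)) * M := by
        refine mul_le_mul_of_nonneg_right (monotoneOn_eval_T_real k ?_
          (one_le_one_add_div_one_sub hβ₀ hβ₁) ?_) ((abs_nonneg _).trans hz.2)
        · rw [mem_Ici, le_sub_iff_add_le, le_div_iff₀ hKpos]
          linarith
        · rw [sub_le_iff_le_add, div_add_one hβ.ne', div_le_div_iff₀ hKpos hβ]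
          linarith

variable {f : V → ℝ} {k : ℕ} {ω : Set V}

open Polynomial.Chebyshev in
theorem abs_le_eval_T_mul_sSup_of_polynomial_on_lines (hB : Convex ℝ B)
    (hbdd : Bornology.IsBounded B) (hω : ω ⊆ B) (hpos : μ ω ≠ 0) (hβ₀ : 0 ≤ β) (hβ₁ : β < 1)
    (hle : (1 - β ^ Module.finrank ℝ V) * μ.real B ≤ μ.real ω) (hfc : Continuous f)
    (hf : ∀ v, ∃ q : Polynomial ℝ, q.natDegree ≤ k ∧ ∀ r, q.eval r = f (y + r • v)) (hy : y ∈ B) :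
    |f y| ≤ (T ℝ k).eval ((1 + β) / (1 - β)) * sSup ((fun z ↦ |f z|) '' ω) := by
  set M := sSup ((fun z ↦ |f z|) '' ω)
  set E := closure B ∩ {z | |f z| ≤ M}
  have hωB : ω ⊆ closure B := hω.trans subset_closure
  have hM : BddAbove ((fun z ↦ |f z|) '' ω) :=
    (hbdd.isCompact_closure.bddAbove_image hfc.abs.continuousOn).mono (image_mono hωB)
  have hωE : ω ⊆ E := fun z hz ↦ ⟨hωB hz, le_csSup hM (mem_image_of_mem _ hz)⟩
  have hE : IsClosed E := isClosed_closure.inter (isClosed_le hfc.abs continuous_const)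
  have hvol : μ (closure B) = μ B := measure_closure_of_null_frontier (hB.addHaar_frontier μ)
  have hmeas : .ofReal (1 - β ^ Module.finrank ℝ V) * μ (closure B) ≤ μ E := calc
    _ = ENNReal.ofReal ((1 - β ^ Module.finrank ℝ V) * μ.real B) := by
        rw [hvol, ENNReal.ofReal_mul' measureReal_nonneg, ofReal_measureReal hbdd.measure_lt_top.ne]
    _ ≤ μ ω := ENNReal.ofReal_le_of_le_toReal hle
    _ ≤ μ E := measure_mono hωE
  exact abs_le_eval_T_mul_of_polynomial_on_lines (hB.closure.starConvex (subset_closure hy))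
    hbdd.closure isClosed_closure.measurableSet hE.measurableSet inter_subset_left
    (fun h ↦ hpos (measure_mono_null hωB h)) hβ₀ hβ₁ hmeas hf fun z hz ↦ hz.2

end Rays

lemma exists_polynomial_eval_eq_eval_add_smul {σ R : Type*} [CommSemiring R] {k : ℕ}
    {p : MvPolynomial σ R} (hp : p.totalDegree ≤ k) (y v : σ → R) :
    ∃ q : Polynomial R, q.natDegree ≤ k ∧ ∀ r, q.eval r = MvPolynomial.eval (y + r • v) p := by
  let ℓ (i : σ) : Polynomial R := .C (v i) * .X + .C (y i)
  refine ⟨MvPolynomial.aeval ℓ p, ?_, fun r ↦ ?_⟩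
  · simpa using MvPolynomial.aeval_natDegree_le (n := 1) p hp ℓ
      fun _ ↦ Polynomial.natDegree_linear_le
  · rw [← Polynomial.coe_evalRingHom, MvPolynomial.aeval_def, MvPolynomial.hom_eval₂,
      MvPolynomial.eval, MvPolynomial.coe_eval₂Hom]
    congr 1
    · ext; simp
    · ext i; simp [ℓ]; ring

theorem brudnyi_ganzburg_general {ι : Type*} [Fintype ι] [Nonempty ι] {k : ℕ}
    {B ω : Set (EuclideanSpace ℝ ι)} (hB : Convex ℝ B) (hbdd : Bornology.IsBounded B)
    (hω : ω ⊆ B) (hpos : 0 < volume ω) {p : MvPolynomial ι ℝ} (hp : p.totalDegree ≤ k) :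
    (∀ y ∈ B,
      |MvPolynomial.eval (fun i ↦ y i) p| ≤
        (Polynomial.Chebyshev.T ℝ (k : ℤ)).eval
            ((1 + (1 - (volume ω).toReal / (volume B).toReal) ^ ((1 : ℝ) / Fintype.card ι)) /
             (1 - (1 - (volume ω).toReal / (volume B).toReal) ^ ((1 : ℝ) / Fintype.card ι))) *
          sSup ((fun z ↦ |MvPolynomial.eval (fun i ↦ z i) p|) '' ω)) ∧
    ∀ y ∈ B,
      |MvPolynomial.eval (fun i ↦ y i) p| ≤
        (4 * Fintype.card ι * (volume B).toReal / (volume ω).toReal) ^ k *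
          sSup ((fun z ↦ |MvPolynomial.eval (fun i ↦ z i) p|) '' ω) := by
  have hn : Fintype.card ι ≠ 0 := Fintype.card_ne_zero
  have hBfin : volume B ≠ ⊤ := hbdd.measure_lt_top.ne
  have hωpos : 0 < (volume ω).toReal :=
    ENNReal.toReal_pos hpos.ne' (measure_ne_top_of_subset hω hBfin)
  have hωB : (volume ω).toReal ≤ (volume B).toReal := measureReal_mono hω hBfin
  have hBpos : 0 < (volume B).toReal := hωpos.trans_le hωB
  have hρ : (volume ω).toReal / (volume B).toReal ∈ Ioc 0 1 :=
    ⟨div_pos hωpos hBpos, div_le_one_of_le₀ hωB hBpos.le⟩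
  obtain ⟨hβ₀, hβ₁⟩ := one_sub_rpow_one_div_mem_Ico hn hρ
  have hβn := one_sub_one_sub_rpow_one_div_pow hn hρ.2
  have hcheb (y) (hy : y ∈ B) := abs_le_eval_T_mul_sSup_of_polynomial_on_lines (k := k)
    (f := fun z : EuclideanSpace ℝ ι ↦ MvPolynomial.eval (fun i ↦ z i) p)
    hB hbdd hω hpos.ne' hβ₀ hβ₁
    (by rw [finrank_euclideanSpace, hβn]; exact (div_mul_cancel₀ _ hBpos.ne').le)
    ((MvPolynomial.continuous_eval p).comp (by fun_prop))
    (fun v ↦ exists_polynomial_eval_eq_eval_add_smul hp _ _) hy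
  refine ⟨hcheb, fun y hy ↦ (hcheb y hy).trans (mul_le_mul_of_nonneg_right ?_ ?_)⟩
  · refine (eval_T_one_add_div_one_sub_le hn k hβ₀ hβ₁).trans_eq ?_
    rw [hβn, div_div_eq_mul_div]
  · exact Real.sSup_nonneg (by rintro _ ⟨z, -, rfl⟩; exact abs_nonneg _)

/-- The **Brudnyi–Ganzburg inequality**: for a ball `B ⊂ ℝⁿ`, a measurable
`ω ⊂ B` of positive measure and a real polynomial `p` of degree at most `k`,
`sup_B |p| ≤ T_k((1+β)/(1-β)) · sup_ω |p|` with
`β = (1 - |ω|/|B|)^{1/n}`; in particular `sup_B |p| ≤ (4n|B|/|ω|)^k sup_ω |p|`. -/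
theorem brudnyi_ganzburg (n k : ℕ) (hn : 0 < n) (x : EuclideanSpace ℝ (Fin n))
    (t : ℝ) (ht : 0 < t) (ω : Set (EuclideanSpace ℝ (Fin n)))
    (hω : ω ⊆ ball x t) (hmeas : MeasurableSet ω) (hpos : 0 < volume ω)
    (p : MvPolynomial (Fin n) ℝ) (hp : p.totalDegree ≤ k) :
    (∀ y ∈ ball x t,
      |MvPolynomial.eval (fun i => y i) p| ≤
        (Polynomial.Chebyshev.T ℝ (k : ℤ)).eval
            ((1 + (1 - (volume ω).toReal / (volume (ball x t)).toReal) ^ ((1 : ℝ) / n)) /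
             (1 - (1 - (volume ω).toReal / (volume (ball x t)).toReal) ^ ((1 : ℝ) / n))) *
          sSup ((fun z => |MvPolynomial.eval (fun i => z i) p|) '' ω)) ∧
    ∀ y ∈ ball x t,
      |MvPolynomial.eval (fun i => y i) p| ≤
        (4 * n * (volume (ball x t)).toReal / (volume ω).toReal) ^ k *
          sSup ((fun z => |MvPolynomial.eval (fun i => z i) p|) '' ω) := by
  have : Nonempty (Fin n) := ⟨⟨0, hn⟩⟩
  simpa using brudnyi_ganzburg_general (convex_ball x t) isBounded_ball hω hpos hp
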